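/- arXiv:math/0008196 — 6 statements merged into one kernel-verified Lean document; each statement's English description precedes it below -/
import Mathlib

section
/- Let R be a unital associative algebra over ℝ with an involution *, and let q be a nonzero real scalar. Suppose z, A, B ∈ R are such that z z* − q z* z = 1 and each of A, B, A*, B* commutes with both z and z*. If B B* = q B* B, A B = q B A, A B* = q B* A, and A* A = A A* = 1, then the element δ(z) = B + A z satisfies δ(z) δ(z)* − q δ(z)* δ(z) = 1. -/
/-!
The `q`-commutator `[x, y]_q = x y - q y x` is biadditive, so `[δ, δ*]_q` for `δ = B + A z` splits
into four terms. The three that involve `B` are multiples of the `q`-commutators `[B, B*]_q`,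
`[A, B]_q` and `[A, B*]_q`, and so vanish. The fourth, `[A z, (A z)*]_q`, equals `[z, z*]_q`
because `A` is unitary and commutes with `z`.
-/

section QCommutator

variable {k R : Type*} [CommSemiring k] [Ring R] [Algebra k R]

/-- The `q`-commutator `[x, y]_q = x y - q y x`, which measures the failure of the `q`-commutation
relation `x y = q y x`. The scalar `q` multiplies the product in reversed order. -/
def qCommutator (q : k) (x y : R) : R :=
  x * y - q • (y * x)

theorem qCommutator_eq_zero_iff {q : k} {x y : R} :
    qCommutator q x y = 0 ↔ x * y = q • (y * x) :=
  sub_eq_zero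

theorem qCommutator_add_left (q : k) (x₁ x₂ y : R) :
    qCommutator q (x₁ + x₂) y = qCommutator q x₁ y + qCommutator q x₂ y := by
  simp only [qCommutator, add_mul, mul_add, smul_add, add_sub_add_comm]

theorem qCommutator_add_right (q : k) (x y₁ y₂ : R) :
    qCommutator q x (y₁ + y₂) = qCommutator q x y₁ + qCommutator q x y₂ := by
  simp only [qCommutator, add_mul, mul_add, smul_add, add_sub_add_comm]

theorem qCommutator_mul_left_of_commute (q : k) (x : R) {y z : R} (hzy : Commute z y) :
    qCommutator q (x * z) y = qCommutator q x y * z := by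
  simp only [qCommutator, sub_mul, smul_mul_assoc, mul_assoc, hzy.eq]

theorem qCommutator_mul_right_of_commute (q : k) {x z : R} (y : R) (hxz : Commute x z) :
    qCommutator q x (z * y) = z * qCommutator q x y := by
  simp only [qCommutator, mul_sub, mul_smul_comm, ← mul_assoc, hxz.eq]

variable [StarRing R] {u : R}

theorem qCommutator_star_right_of_mem_unitary (q : k) (hu : u ∈ unitary R) (x : R) :
    qCommutator q x (star u) = star u * qCommutator q u x * star u := by
  have hleft : star u * (u * x) * star u = x * star u := by
    rw [← mul_assoc, Unitary.star_mul_self_of_mem hu, one_mul]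
  have hright : star u * (x * u) * star u = star u * x := by
    rw [mul_assoc, mul_assoc, Unitary.mul_star_self_of_mem hu, mul_one]
  rw [qCommutator, qCommutator, mul_sub, sub_mul, mul_smul_comm, smul_mul_assoc, hleft, hright]

theorem qCommutator_unitary_mul_star_self (q : k) (hu : u ∈ unitary R) {z : R}
    (huz : Commute u z) :
    qCommutator q (u * z) (star (u * z)) = qCommutator q z (star z) := by
  have hmul_star : u * z * star (u * z) = z * star z := by
    rw [huz.eq, star_mul, mul_assoc, ← mul_assoc u, Unitary.mul_star_self_of_mem hu, one_mul]
  have hstar_mul : star (u * z) * (u * z) = star z * z := by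
    rw [star_mul, mul_assoc, ← mul_assoc (star u), Unitary.star_mul_self_of_mem hu, one_mul]
  rw [qCommutator, qCommutator, hmul_star, hstar_mul]

end QCommutator

theorem deformed_plane_relation_invariant_general
    {k R : Type*} [CommSemiring k] [Ring R] [Algebra k R] [StarRing R]
    (q : k) {z A B : R} (hA : A ∈ unitary R)
    (hAz : Commute A z) (hBzs : Commute B (star z))
    (hBB : B * star B = q • (star B * B))
    (hAB : A * B = q • (B * A))
    (hABs : A * star B = q • (star B * A)) :
    (B + A * z) * star (B + A * z) - q • (star (B + A * z) * (B + A * z)) =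
      z * star z - q • (star z * z) := by
  rw [← qCommutator_eq_zero_iff] at hBB hAB hABs
  have hBAz : qCommutator q B (star (A * z)) = 0 := by
    rw [star_mul, qCommutator_mul_right_of_commute q _ hBzs,
      qCommutator_star_right_of_mem_unitary q hA, hAB, mul_zero, zero_mul, mul_zero]
  have hAzB : qCommutator q (A * z) (star B) = 0 := by
    rw [qCommutator_mul_left_of_commute q A (commute_star_comm.mpr hBzs).symm, hABs, zero_mul]
  calc
    qCommutator q (B + A * z) (star (B + A * z))
    _ = qCommutator q (A * z) (star (A * z)) := by
      rw [star_add, qCommutator_add_left, qCommutator_add_right, qCommutator_add_right,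
        hBB, hBAz, hAzB, add_zero, zero_add, zero_add]
    _ = qCommutator q z (star z) := qCommutator_unitary_mul_star_self q hA hAz

/-- If `z z* − q • (z* z) = 1`, the elements `A, B` satisfy the `E_q(2)`
relations, and `A, B, A*, B*` all commute with `z` and `z*`, then
`δ(z) = B + A z` satisfies `δ(z) δ(z)* − q • (δ(z)* δ(z)) = 1`. -/
theorem deformed_plane_relation_invariant
    {R : Type*} [Ring R] [Algebra ℝ R] [StarRing R] [StarModule ℝ R]
    (q : ℝ) (hq : q ≠ 0) (z A B : R)
    (hz : z * star z - q • (star z * z) = 1)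
    (hAz : Commute A z) (hAzs : Commute A (star z))
    (hBz : Commute B z) (hBzs : Commute B (star z))
    (hAsz : Commute (star A) z) (hAszs : Commute (star A) (star z))
    (hBsz : Commute (star B) z) (hBszs : Commute (star B) (star z))
    (hBB : B * star B = q • (star B * B))
    (hAB : A * B = q • (B * A))
    (hABs : A * star B = q • (star B * A))
    (hAsA : star A * A = 1) (hAAs : A * star A = 1) :
    (B + A * z) * star (B + A * z) - q • (star (B + A * z) * (B + A * z)) = 1 :=
  (deformed_plane_relation_invariant_general q ⟨hAsA, hAAs⟩ hAz hBzs hBB hAB hABs).trans hz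
end

section
/- Let R be a unital associative algebra over ℝ with an involution *, and q a nonzero real scalar. Suppose A, B ∈ R satisfy the E_q(2) relations B B* = q B* B, A B = q B A, A B* = q B* A, A* A = A A* = 1, and A′, B′ ∈ R satisfy the same relations B′B′* = q B′*B′, A′B′ = q B′A′, A′B′* = q B′*A′, A′*A′ = A′A′* = 1. If moreover each of A′, B′, A′*, B′* commutes with each of A, B, A*, B*, then the elements B″ = B′ + A′B and A″ = A′A again satisfy the E_q(2) relations: B″B″* = q B″*B″, A″B″ = q B″A″, A″B″* = q B″*A″, and A″*A″ = A″A″* = 1. -/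
/-!
All the relations involve a single scalar `q`, so they can be checked monomial by monomial.
A `q`-commutation survives multiplying one of its sides by an element commuting with the other
side. In `B'' B''⋆` two pairs of monomials also need the unitarity of `A'`: for `B'` and
`(A' B)⋆`, conjugating `A' B' = q B' A'` by `A'` gives `B' A'⋆ = q A'⋆ B'`; for `A' B` and
`(A' B)⋆`, the factor `A'` cancels from both products.
-/

/-- `x` and `y` commute up to the scalar `q`: `x * y = q • (y * x)`. The order matters, as
`QCommute q y x` puts the scalar on the other side. -/
def QCommute {K R : Type*} [Mul R] [SMul K R] (q : K) (x y : R) : Prop :=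
  x * y = q • (y * x)

namespace QCommute

section Mul

variable {K R : Type*} [Semigroup R] [SMul K R] {q : K} {x y z : R}

theorem mul_left_of_commute_right [IsScalarTower K R R]
    (hx : QCommute q x z) (hy : Commute y z) :
    QCommute q (x * y) z :=
  calc
    x * y * z = x * z * y := by rw [mul_assoc, hy.eq, mul_assoc]
    _ = q • (z * (x * y)) := by rw [hx, smul_mul_assoc, mul_assoc]

theorem mul_left_of_commute_left [SMulCommClass K R R]
    (hx : Commute x z) (hy : QCommute q y z) :
    QCommute q (x * y) z :=
  calc
    x * y * z = q • (x * z * y) := by rw [mul_assoc, hy, mul_smul_comm, mul_assoc]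
    _ = q • (z * (x * y)) := by rw [hx.eq, mul_assoc]

theorem mul_right_of_commute_right [IsScalarTower K R R]
    (hy : QCommute q x y) (hz : Commute x z) :
    QCommute q x (y * z) :=
  calc
    x * (y * z) = q • (y * (x * z)) := by rw [← mul_assoc, hy, smul_mul_assoc, mul_assoc]
    _ = q • (y * z * x) := by rw [hz.eq, mul_assoc]

theorem mul_right_of_commute_left [SMulCommClass K R R]
    (hy : Commute x y) (hz : QCommute q x z) :
    QCommute q x (y * z) :=
  calc
    x * (y * z) = y * (x * z) := by rw [← mul_assoc, hy.eq, mul_assoc]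
    _ = q • (y * z * x) := by rw [hz, mul_smul_comm, mul_assoc]

end Mul

section Add

variable {K R : Type*} [NonUnitalNonAssocSemiring R] [DistribSMul K R] {q : K} {x y z : R}

theorem add_left (hx : QCommute q x z) (hy : QCommute q y z) : QCommute q (x + y) z := by
  rw [QCommute, add_mul, mul_add, smul_add, hx, hy]

theorem add_right (hy : QCommute q x y) (hz : QCommute q x z) : QCommute q x (y + z) := by
  rw [QCommute, mul_add, add_mul, smul_add, hy, hz]

end Add

theorem units_inv_right {K R : Type*} [Monoid R] [SMul K R] [IsScalarTower K R R]
    [SMulCommClass K R R] {q : K} {u : Rˣ} {x : R} (h : QCommute q (u : R) x) :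
    QCommute q x (↑u⁻¹ : R) :=
  calc
    x * ↑u⁻¹ = ↑u⁻¹ * (u * x) * ↑u⁻¹ := by rw [Units.inv_mul_cancel_left]
    _ = q • (↑u⁻¹ * x) := by
      rw [h, mul_smul_comm, smul_mul_assoc, ← mul_assoc, Units.mul_inv_cancel_right]

section Unitary

variable {K R : Type*} [Monoid R] [StarMul R] [SMul K R] {q : K} {u x : R}

theorem star_right_of_mem_unitary [IsScalarTower K R R] [SMulCommClass K R R]
    (hu : u ∈ unitary R) (h : QCommute q u x) : QCommute q x (star u) :=
  units_inv_right (u := Unitary.toUnits ⟨u, hu⟩) h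

theorem unitary_mul_self_star (hu : u ∈ unitary R) (hux : Commute u x)
    (h : QCommute q x (star x)) : QCommute q (u * x) (star (u * x)) :=
  calc
    u * x * star (u * x) = x * (u * star u) * star x := by
      rw [hux.eq, star_mul, mul_assoc, mul_assoc, mul_assoc]
    _ = q • (star x * (star u * u) * x) := by
      rw [Unitary.mul_star_self_of_mem hu, Unitary.star_mul_self_of_mem hu, mul_one, mul_one, h]
    _ = q • (star (u * x) * (u * x)) := by
      rw [star_mul, mul_assoc, mul_assoc, mul_assoc]

end Unitary

end QCommute

theorem commute_star_right_of_mem_unitary {R : Type*} [Monoid R] [StarMul R] {u x : R}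
    (hu : u ∈ unitary R) (h : Commute u x) : Commute u (star x) :=
  Commute.star_right (Commute.units_inv_left (u := Unitary.toUnits ⟨u, hu⟩) h)

/-- The defining relations of the quantum group `E_q(2)` for a pair of generators `a`, `b`:
`a` is the unitary (rotation) generator and `b` the translation generator. The scalars carry no
involution, so the relation between `a` and `star b` is a separate field. -/
structure IsEq2Pair {K R : Type*} [Monoid R] [StarMul R] [SMul K R] (q : K) (a b : R) : Prop where
  mem_unitary : a ∈ unitary R
  qCommute : QCommute q a b
  qCommute_star : QCommute q a (star b)
  qCommute_self_star : QCommute q b (star b)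

theorem Eq2_group_multiplication_general {K R : Type*} [CommSemiring K] [Semiring R] [Algebra K R]
    [StarRing R] {q : K} {a b a' b' : R} (h : IsEq2Pair q a b) (h' : IsEq2Pair q a' b')
    (haa : Commute a' a) (hab : Commute a' b) (hba : Commute b' a) (hbb : Commute b' (star b)) :
    IsEq2Pair q (a' * a) (b' + a' * b) where
  mem_unitary := mul_mem h'.mem_unitary h.mem_unitary
  qCommute :=
    have hb' : QCommute q (a' * a) b' := h'.qCommute.mul_left_of_commute_right hba.symm
    have hb : QCommute q (a' * a) b := .mul_left_of_commute_left hab h.qCommute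
    have ha' : Commute (a' * a) a' := (Commute.refl a').mul_left haa.symm
    hb'.add_right (.mul_right_of_commute_left ha' hb)
  qCommute_star := by
    have hb' : QCommute q (a' * a) (star b') :=
      h'.qCommute_star.mul_left_of_commute_right
        (commute_star_right_of_mem_unitary h.mem_unitary hba.symm)
    have hb : QCommute q (a' * a) (star b) :=
      .mul_left_of_commute_left (commute_star_right_of_mem_unitary h'.mem_unitary hab)
        h.qCommute_star
    have ha' : Commute (a' * a) (star a') :=
      commute_star_right_of_mem_unitary (mul_mem h'.mem_unitary h.mem_unitary)
        ((Commute.refl a').mul_left haa.symm)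
    rw [star_add, star_mul]
    exact hb'.add_right (hb.mul_right_of_commute_right ha')
  qCommute_self_star := by
    have hb'_ab : QCommute q b' (star (a' * b)) := by
      rw [star_mul]
      exact .mul_right_of_commute_left hbb (h'.qCommute.star_right_of_mem_unitary h'.mem_unitary)
    have hab_b' : QCommute q (a' * b) (star b') :=
      h'.qCommute_star.mul_left_of_commute_right hbb.symm.star_right
    have hab_ab : QCommute q (a' * b) (star (a' * b)) :=
      .unitary_mul_self_star h'.mem_unitary hab h.qCommute_self_star
    rw [star_add]
    exact (h'.qCommute_self_star.add_right hb'_ab).add_left (hab_b'.add_right hab_ab)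

/-- The group multiplication law of `E_q(2)`: if `A, B` and `A', B'`
both satisfy the `E_q(2)` relations and the primed generators commute with the
unprimed ones, then `B'' = B' + A' B` and `A'' = A' A` again satisfy the relations. -/
theorem Eq2_group_multiplication
    {R : Type*} [Ring R] [Algebra ℝ R] [StarRing R] [StarModule ℝ R]
    (q : ℝ) (hq : q ≠ 0) (A B A' B' : R)
    (hBB : B * star B = q • (star B * B))
    (hAB : A * B = q • (B * A))
    (hABs : A * star B = q • (star B * A))
    (hAsA : star A * A = 1) (hAAs : A * star A = 1)
    (hBB' : B' * star B' = q • (star B' * B'))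
    (hAB' : A' * B' = q • (B' * A'))
    (hABs' : A' * star B' = q • (star B' * A'))
    (hAsA' : star A' * A' = 1) (hAAs' : A' * star A' = 1)
    (hcomm : ∀ x ∈ ({A', B', star A', star B'} : Set R),
      ∀ y ∈ ({A, B, star A, star B} : Set R), Commute x y) :
    (B' + A' * B) * star (B' + A' * B) = q • (star (B' + A' * B) * (B' + A' * B)) ∧
    (A' * A) * (B' + A' * B) = q • ((B' + A' * B) * (A' * A)) ∧
    (A' * A) * star (B' + A' * B) = q • (star (B' + A' * B) * (A' * A)) ∧
    star (A' * A) * (A' * A) = 1 ∧ (A' * A) * star (A' * A) = 1 := by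
  obtain ⟨hu, hqc, hqs, hss⟩ := Eq2_group_multiplication_general
    ⟨Unitary.mem_iff.mpr ⟨hAsA, hAAs⟩, hAB, hABs, hBB⟩
    ⟨Unitary.mem_iff.mpr ⟨hAsA', hAAs'⟩, hAB', hABs', hBB'⟩
    (hcomm A' (by simp) A (by simp)) (hcomm A' (by simp) B (by simp))
    (hcomm B' (by simp) A (by simp)) (hcomm B' (by simp) (star B) (by simp))
  exact ⟨hss, hqc, hqs, Unitary.mem_iff.mp hu⟩
end

section
/- Let R be a unital associative algebra over ℝ, let 0 < q < 1 be a real scalar, let z, z* ∈ R satisfy z z* = q z* z + 1, and set ζ = 1 − (1 − q) z* z. Then for every n ∈ ℕ, (z*)^n z^n = (−1)^n q^{n(1−n)/2} (1 − q)^{−n} ∏_{i=0}^{n−1} (ζ − q^i), where the product is taken in R (its factors commute) and q^{n(1−n)/2} is the (integer) power of the real number q. -/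
/-! The relation `z z* = q z* z + 1` gives `z ζ = q ζ z`, hence
`zⁿ (ζ - qⁿ) = qⁿ (ζ - 1) zⁿ = qⁿ (q - 1) z* zⁿ⁺¹`. So multiplying `(z*)ⁿ zⁿ` on the right by
`ζ - qⁿ` produces a scalar multiple of `(z*)ⁿ⁺¹ zⁿ⁺¹`, and the product telescopes without any
division; the scalars are inverted only at the end. -/

theorem pow_mul_eq_pow_smul_of_mul_eq_smul {M A : Type*} [Monoid M] [Monoid A] [MulAction M A]
    [IsScalarTower M A A] [SMulCommClass M A A] {q : M} {a b : A} (h : a * b = q • (b * a))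
    (n : ℕ) : a ^ n * b = q ^ n • (b * a ^ n) := by
  induction n with
  | zero => simp
  | succ n ih =>
    calc a ^ (n + 1) * b = q • (a ^ n * b * a) := by
          rw [pow_succ, mul_assoc, h, mul_smul_comm, mul_assoc]
      _ = q ^ (n + 1) • (b * a ^ (n + 1)) := by
          rw [ih, smul_mul_assoc, smul_smul, ← pow_succ', mul_assoc, ← pow_succ]

section CommRing

variable {K R : Type*} [CommRing K] [Ring R] [Algebra K R]

/-- The element `ζ = 1 - (1 - q) z* z` of the `q`-deformed Heisenberg algebra, with `w` in the
role of `z*`. Under the relation `z w = q w z + 1` it is the commutator `z w - w z`. -/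
def qHeisenbergZeta (q : K) (z w : R) : R :=
  1 - (1 - q) • (w * z)

theorem mul_qHeisenbergZeta {q : K} {z w : R} (h : z * w = q • (w * z) + 1) :
    z * qHeisenbergZeta q z w = q • (qHeisenbergZeta q z w * z) := by
  have hzwz : z * (w * z) = q • (w * z * z) + z := by
    rw [← mul_assoc, h, add_mul, one_mul, smul_mul_assoc]
  simp only [qHeisenbergZeta, mul_sub, sub_mul, mul_one, one_mul, mul_smul_comm, smul_mul_assoc,
    hzwz]
  module

theorem pow_mul_qHeisenbergZeta_sub {q : K} {z w : R} (h : z * w = q • (w * z) + 1) (n : ℕ) :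
    z ^ n * (qHeisenbergZeta q z w - q ^ n • 1) = (q ^ n * (q - 1)) • (w * z ^ (n + 1)) :=
  calc
    z ^ n * (qHeisenbergZeta q z w - q ^ n • 1)
      = q ^ n • ((qHeisenbergZeta q z w - 1) * z ^ n) := by
        rw [mul_sub, pow_mul_eq_pow_smul_of_mul_eq_smul (mul_qHeisenbergZeta h), mul_smul_comm,
          mul_one, sub_mul, one_mul, smul_sub]
    _ = q ^ n • ((q - 1) • (w * z) * z ^ n) := by
        rw [qHeisenbergZeta, sub_sub_cancel_left, ← neg_smul, neg_sub]
    _ = (q ^ n * (q - 1)) • (w * z ^ (n + 1)) := by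
        rw [smul_mul_assoc, smul_smul, mul_assoc, ← pow_succ']

theorem prod_range_qHeisenbergZeta_sub {q : K} {z w : R} (h : z * w = q • (w * z) + 1) (n : ℕ) :
    ((List.range n).map fun i ↦ qHeisenbergZeta q z w - q ^ i • 1).prod =
      ((q - 1) ^ n * q ^ n.choose 2) • (w ^ n * z ^ n) := by
  induction n with
  | zero => simp
  | succ n ih =>
    have hscalar : (q - 1) ^ n * q ^ n.choose 2 * (q ^ n * (q - 1)) =
        (q - 1) ^ (n + 1) * q ^ (n + 1).choose 2 := by
      rw [Nat.choose_succ_succ' n 1, Nat.choose_one_right]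
      ring
    rw [List.prod_range_succ, ih, smul_mul_assoc, mul_assoc, pow_mul_qHeisenbergZeta_sub h,
      mul_smul_comm, smul_smul, hscalar, ← mul_assoc, ← pow_succ]

end CommRing

theorem natCast_mul_one_sub_ediv_two (n : ℕ) : (n : ℤ) * (1 - n) / 2 = -(n.choose 2 : ℤ) := by
  have htwice : (n.choose 2 : ℤ) * 2 = n * (n - 1) := by
    qify
    rw [Nat.cast_choose_two]
    ring
  exact Int.ediv_eq_of_eq_mul_left two_ne_zero (by linear_combination htwice)

theorem zstar_z_power_product_general {K R : Type*} [Field K] [Ring R] [Algebra K R] {q : K}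
    (hq0 : q ≠ 0) (hq1 : q ≠ 1) {z w : R} (h : z * w = q • (w * z) + 1) (n : ℕ) :
    w ^ n * z ^ n =
      ((-1 : K) ^ n * q ^ ((n : ℤ) * (1 - n) / 2) * (1 - q) ^ (-(n : ℤ))) •
        ((List.range n).map fun i ↦ qHeisenbergZeta q z w - q ^ i • 1).prod := by
  have hscalar : (-1 : K) ^ n * q ^ ((n : ℤ) * (1 - n) / 2) * (1 - q) ^ (-(n : ℤ)) =
      ((q - 1) ^ n * q ^ n.choose 2)⁻¹ := by
    rw [natCast_mul_one_sub_ediv_two, zpow_neg, zpow_neg, zpow_natCast, zpow_natCast,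
      ← neg_sub 1 q, neg_pow (1 - q), mul_inv, mul_inv, ← inv_pow (-1 : K), inv_neg_one]
    ring
  rw [hscalar, prod_range_qHeisenbergZeta_sub h, inv_smul_smul₀]
  exact mul_ne_zero (pow_ne_zero n (sub_ne_zero.mpr hq1)) (pow_ne_zero _ hq0)

/-- If `z z* = q • (z* z) + 1` with `0 < q < 1` and
`ζ = 1 - (1-q) • (z* z)`, then
`(z*)^n z^n = (-1)^n q^{n(1-n)/2} (1-q)^{-n} • ∏_{i=0}^{n-1} (ζ - q^i)`. -/
theorem zstar_z_power_product
    {R : Type*} [Ring R] [Algebra ℝ R]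
    (q : ℝ) (hq0 : 0 < q) (hq1 : q < 1) (z w : R)
    (h : z * w = q • (w * z) + 1) (n : ℕ) :
    w ^ n * z ^ n =
      ((-1 : ℝ) ^ n * q ^ (((n : ℤ) * (1 - (n : ℤ))) / 2) * (1 - q) ^ (-(n : ℤ))) •
        ((List.range n).map
          (fun i => (1 - (1 - q) • (w * z)) - (q ^ i : ℝ) • (1 : R))).prod :=
  zstar_z_power_product_general hq0.ne' hq1.ne h n
end

section
/- Let j ∈ ℕ and let λ > 0, η > 0 be real numbers. Then ∑_{s=0}^∞ (η^{2s}/s!) · Φ(−s, 1+j; λ²) = j! · (λη)^{−j} · e^{η²} · 𝒥_j(λη), where the series on the left converges absolutely. -/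
noncomputable section

/-- The rising factorial `(c)_k = c(c+1)⋯(c+k-1)` for real `c`. -/
def risingFactorial (c : ℝ) (k : ℕ) : ℝ := ∏ i ∈ Finset.range k, (c + i)

/-- Kummer's confluent hypergeometric function
`Φ(c,d;x) = ∑_{k=0}^∞ (c)_k/((d)_k k!) x^k`. -/
def kummerPhi (c d x : ℝ) : ℝ :=
  ∑' k : ℕ, risingFactorial c k / (risingFactorial d k * k.factorial) * x ^ k

/-- The Bessel-type function `𝒥_j(x) = ∑_{m=0}^∞ (-1)^m x^{2m+j}/(m!(m+j)!)`,
equal to the classical Bessel function `J_j(2x)`. -/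
def besselJJ (j : ℕ) (x : ℝ) : ℝ :=
  ∑' m : ℕ, (-1 : ℝ) ^ m * x ^ (2 * m + j) / (m.factorial * (m + j).factorial)

/-!
Since `(-s)_k = (-1)^k k! (s choose k)`, the polynomial `Φ(-s, d; x)` is the binomial transform
`∑_k (s choose k) a_k` of `a_k = (-x)^k / (d)_k`. A binomial transform multiplies the exponential
generating function by `e^y`, and the exponential generating function of `a` at `y` is
`₀F₁(; d; -xy)`, which for `d = 1 + j` is a Bessel function of order `j` up to a monomial factor.
-/

open Filter Topology
open scoped Nat

theorem risingFactorial_succ (c : ℝ) (k : ℕ) :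
    risingFactorial c (k + 1) = risingFactorial c k * (c + k) :=
  Finset.prod_range_succ _ _

theorem risingFactorial_eq_ascPochhammer_eval (c : ℝ) (k : ℕ) :
    risingFactorial c k = (ascPochhammer ℝ k).eval c := by
  induction k with
  | zero => simp [risingFactorial]
  | succ k ih => rw [risingFactorial_succ, ascPochhammer_succ_eval, ih]

theorem risingFactorial_ne_zero {d : ℝ} (hd : ∀ n : ℕ, d ≠ -n) (k : ℕ) :
    risingFactorial d k ≠ 0 :=
  Finset.prod_ne_zero_iff.mpr fun n _ h ↦ hd n (eq_neg_of_add_eq_zero_left h)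

theorem risingFactorial_neg_natCast (s k : ℕ) :
    risingFactorial (-(s : ℝ)) k = (-1) ^ k * (k ! * s.choose k) := by
  rw [risingFactorial_eq_ascPochhammer_eval, ascPochhammer_eval_neg_eq_descPochhammer,
    descPochhammer_eval_eq_descFactorial, Nat.descFactorial_eq_factorial_mul_choose, Nat.cast_mul]

theorem factorial_mul_risingFactorial_one_add (j k : ℕ) :
    j ! * risingFactorial (1 + (j : ℝ)) k = (k + j)! := by
  rw [risingFactorial_eq_ascPochhammer_eval, add_comm 1, ← Nat.cast_succ,
    ← Nat.cast_ascFactorial, add_comm k]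
  exact_mod_cast j.factorial_mul_ascFactorial k

theorem kummerPhi_neg_natCast (s : ℕ) (d x : ℝ) :
    kummerPhi (-(s : ℝ)) d x =
      ∑ k ∈ Finset.range (s + 1), s.choose k * ((-x) ^ k / risingFactorial d k) := by
  have term_eq (k : ℕ) :
      risingFactorial (-(s : ℝ)) k / (risingFactorial d k * k !) * x ^ k =
        s.choose k * ((-x) ^ k / risingFactorial d k) := by
    rw [risingFactorial_neg_natCast, neg_pow x]
    field_simp
  simp only [kummerPhi, term_eq]
  refine tsum_eq_sum fun k hk ↦ ?_
  rw [Nat.choose_eq_zero_of_lt (by simpa using hk), Nat.cast_zero, zero_mul]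

theorem pow_div_factorial_mul_sum_choose_eq_sum_antidiagonal {K : Type*} [Field K] [CharZero K]
    (a : ℕ → K) (y : K) (s : ℕ) :
    y ^ s / s ! * ∑ k ∈ Finset.range (s + 1), s.choose k * a k =
      ∑ p ∈ Finset.HasAntidiagonal.antidiagonal s, y ^ p.1 / p.1 ! * a p.1 * (y ^ p.2 / p.2 !) := by
  rw [Finset.Nat.sum_antidiagonal_eq_sum_range_succ
    (fun k m ↦ y ^ k / k ! * a k * (y ^ m / m !)), Finset.mul_sum]
  refine Finset.sum_congr rfl fun k hk ↦ ?_
  have hks : k ≤ s := Finset.mem_range_succ_iff.mp hk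
  rw [Nat.cast_choose K hks, ← pow_mul_pow_sub y hks]
  have factorial_ne_zero : (s ! : K) ≠ 0 := Nat.cast_ne_zero.mpr s.factorial_ne_zero
  field_simp

theorem hasSum_binomialTransform {𝕜 : Type*} [NormedField 𝕜] [NormedAlgebra ℚ 𝕜]
    [CompleteSpace 𝕜] {a : ℕ → 𝕜} {y : 𝕜}
    (ha : Summable fun k ↦ ‖y ^ k / k ! * a k‖) :
    HasSum (fun s ↦ y ^ s / s ! * ∑ k ∈ Finset.range (s + 1), s.choose k * a k)
      (NormedSpace.exp y * ∑' k, y ^ k / k ! * a k) := by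
  have : CharZero 𝕜 := algebraRat.charZero 𝕜
  have hexp := NormedSpace.norm_expSeries_div_summable y
  simp only [pow_div_factorial_mul_sum_choose_eq_sum_antidiagonal]
  rw [mul_comm, ← (NormedSpace.expSeries_div_hasSum_exp y).tsum_eq,
    tsum_mul_tsum_eq_tsum_sum_antidiagonal_of_summable_norm ha hexp]
  exact (summable_norm_sum_mul_antidiagonal_of_summable_norm ha hexp).of_norm.hasSum

/-- The confluent hypergeometric limit function `₀F₁(; d; z) = ∑_{k=0}^∞ z^k / ((d)_k k!)`, the
common form of the Bessel functions of all orders. -/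
def confluentLimit (d z : ℝ) : ℝ :=
  ∑' k : ℕ, z ^ k / (risingFactorial d k * k !)

theorem summable_norm_confluentLimit_term {d : ℝ} (hd : ∀ n : ℕ, d ≠ -n) (z : ℝ) :
    Summable fun k : ℕ ↦ ‖z ^ k / (risingFactorial d k * k !)‖ := by
  let c (k : ℕ) : ℝ := (risingFactorial d k * k !)⁻¹
  have c_ne_zero (k : ℕ) : c k ≠ 0 :=
    inv_ne_zero (mul_ne_zero (risingFactorial_ne_zero hd k) (by positivity))
  have c_succ (k : ℕ) : c k.succ = ((d + k) * (k + 1))⁻¹ * c k := by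
    simp only [c, risingFactorial_succ, Nat.factorial_succ, Nat.cast_mul, Nat.cast_succ, mul_inv]
    ring
  have ratio_tendsto : Tendsto (fun k ↦ ‖c k.succ‖ / ‖c k‖) atTop (𝓝 0) := by
    simp only [c_succ, norm_mul, mul_div_cancel_right₀ _ (norm_ne_zero_iff.mpr (c_ne_zero _))]
    have hd_add : Tendsto (fun k : ℕ ↦ d + k) atTop atTop :=
      tendsto_atTop_add_const_left _ _ tendsto_natCast_atTop_atTop
    have hk_add : Tendsto (fun k : ℕ ↦ (k : ℝ) + 1) atTop atTop :=
      tendsto_atTop_add_const_right _ _ tendsto_natCast_atTop_atTop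
    simpa using (hd_add.atTop_mul_atTop₀ hk_add).inv_tendsto_atTop.norm
  have radius_eq_top := FormalMultilinearSeries.ofScalars_radius_eq_top_of_tendsto ℝ c
    (Eventually.of_forall c_ne_zero) ratio_tendsto
  have summable_apply := (FormalMultilinearSeries.ofScalars ℝ c).summable_norm_apply (x := z)
    (by simp [radius_eq_top])
  simpa only [FormalMultilinearSeries.ofScalars_apply_eq, c, smul_eq_mul, ← div_eq_inv_mul]
    using summable_apply

theorem besselJJ_eq_confluentLimit (j : ℕ) (x : ℝ) :
    besselJJ j x = x ^ j / j ! * confluentLimit (1 + j) (-x ^ 2) := by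
  rw [besselJJ, confluentLimit, ← tsum_mul_left]
  refine tsum_congr fun k ↦ ?_
  rw [← factorial_mul_risingFactorial_one_add, neg_pow (x ^ 2), pow_add, pow_mul]
  field_simp

theorem kummer_summation_classical_general {d : ℝ} (hd : ∀ n : ℕ, d ≠ -n) (x y : ℝ) :
    HasSum (fun s : ℕ ↦ y ^ s / s ! * kummerPhi (-(s : ℝ)) d x)
      (Real.exp y * confluentLimit d (-(x * y))) := by
  have term_eq (k : ℕ) : (-(x * y)) ^ k / (risingFactorial d k * k !) =
      y ^ k / k ! * ((-x) ^ k / risingFactorial d k) := by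
    rw [← neg_mul, mul_pow]
    field_simp
  have summable_norm := summable_norm_confluentLimit_term hd (-(x * y))
  simp only [term_eq] at summable_norm
  simp only [kummerPhi_neg_natCast, confluentLimit, term_eq, Real.exp_eq_exp_ℝ]
  exact hasSum_binomialTransform summable_norm

/-- `∑_{s=0}^∞ (η^{2s}/s!) Φ(-s, 1+j; λ²) = j! (λη)^{-j} e^{η²} 𝒥_j(λη)`,
with the series on the left converging absolutely. -/
theorem kummer_summation_classical
    (j : ℕ) (lam η : ℝ) (hlam : 0 < lam) (hη : 0 < η) :
    Summable (fun s : ℕ =>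
      η ^ (2 * s) / s.factorial * kummerPhi (-(s : ℝ)) (1 + j) (lam ^ 2)) ∧
    (∑' s : ℕ, η ^ (2 * s) / s.factorial * kummerPhi (-(s : ℝ)) (1 + j) (lam ^ 2)) =
      j.factorial * (lam * η) ^ (-(j : ℤ)) * Real.exp (η ^ 2) * besselJJ j (lam * η) := by
  have hd (n : ℕ) : (1 + j : ℝ) ≠ -n := by linarith
  have h_sum := kummer_summation_classical_general hd (lam ^ 2) (η ^ 2)
  simp only [← pow_mul, ← mul_pow] at h_sum
  refine ⟨h_sum.summable, h_sum.tsum_eq.trans ?_⟩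
  rw [besselJJ_eq_confluentLimit, zpow_neg, zpow_natCast]
  field_simp
end
end

section
/- Let k ∈ ℕ and x ∈ ℝ. Then ∑_{s=0}^∞ (x^s/s!) · 𝒥_{s+k}(x) = x^k/k!, where the series converges absolutely. -/
noncomputable section

/-!
Put `a n = x ^ (n + k) / (n + k)!` and `A t = ∑ n, a n * t ^ n / n!`. The `s`-th derivative of `A`
at `-x` is `∑ m, a (s + m) * (-x) ^ m / m! = 𝒥_{s+k}(x)`, so the series in the theorem is the
Taylor expansion of `A` about `-x`, evaluated at increment `x`. Its sum is `A 0 = a 0`.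
-/

open Finset
open scoped Nat

section Antidiagonal

variable {A : Type*} [AddMonoid A] [HasAntidiagonal A]

lemma hasSum_sum_antidiagonal {M : Type*} [AddCommMonoid M] [TopologicalSpace M] [ContinuousAdd M]
    [RegularSpace M] {f : A × A → M} {b : M} (hf : HasSum f b) :
    HasSum (fun n ↦ ∑ p ∈ antidiagonal n, f p) b :=
  (HasAntidiagonal.sigmaAntidiagonalEquivProd.hasSum_iff.mpr hf).sigma fun n ↦
    (antidiagonal n).hasSum f

lemma summable_of_summable_sum_antidiagonal {f : A × A → ℝ} (hf : ∀ p, 0 ≤ f p)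
    (h : Summable fun n ↦ ∑ p ∈ antidiagonal n, f p) : Summable f := by
  rw [← HasAntidiagonal.sigmaAntidiagonalEquivProd.summable_iff]
  exact (summable_sigma_of_nonneg fun _ ↦ hf _).mpr
    ⟨fun n ↦ (hasSum_fintype _).summable, h.congr fun n ↦ ((antidiagonal n).tsum_subtype f).symm⟩

end Antidiagonal

lemma sum_antidiagonal_pow_div_factorial_mul {K : Type*} [Field K] [CharZero K] (y z : K) (n : ℕ) :
    ∑ p ∈ antidiagonal n, y ^ p.1 / p.1 ! * (z ^ p.2 / p.2 !) = (y + z) ^ n / n ! := by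
  rw [(Commute.all y z).add_pow', sum_div]
  refine sum_congr rfl fun p hp ↦ ?_
  have hn : (n ! : K) ≠ 0 := Nat.cast_ne_zero.mpr n.factorial_ne_zero
  rw [nsmul_eq_mul, ← mem_antidiagonal.mp hp, Nat.cast_add_choose, mem_antidiagonal.mp hp]
  field_simp

lemma sum_antidiagonal_pow_div_factorial_mul_smul {K E : Type*} [Field K] [CharZero K]
    [AddCommMonoid E] [Module K E] (a : ℕ → E) (y z : K) (n : ℕ) :
    ∑ p ∈ antidiagonal n, (y ^ p.1 / p.1 ! * (z ^ p.2 / p.2 !)) • a (p.1 + p.2) =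
      ((y + z) ^ n / n ! : K) • a n := by
  rw [← sum_antidiagonal_pow_div_factorial_mul, sum_smul]
  exact sum_congr rfl fun p hp ↦ by rw [mem_antidiagonal.mp hp]

section Taylor

variable {𝕜 E : Type*} [RCLike 𝕜] [NormedAddCommGroup E] [NormedSpace 𝕜 E] [CompleteSpace E]
  {a : ℕ → E} {y z : 𝕜}

lemma summable_pow_div_factorial_mul_smul_add
    (h : Summable fun n ↦ (‖y‖ + ‖z‖) ^ n / n ! * ‖a n‖) :
    Summable fun p : ℕ × ℕ ↦ (y ^ p.1 / p.1 ! * (z ^ p.2 / p.2 !)) • a (p.1 + p.2) := by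
  refine Summable.of_norm (summable_of_summable_sum_antidiagonal (fun _ ↦ norm_nonneg _) ?_)
  refine h.congr fun n ↦ ?_
  rw [← smul_eq_mul, ← sum_antidiagonal_pow_div_factorial_mul_smul (fun n ↦ ‖a n‖)]
  simp [norm_smul]

/-- Taylor's theorem for `A t = ∑ n, (t ^ n / n!) • a n`: the inner sum is the `s`-th derivative
of `A` at `z`. -/
lemma hasSum_pow_div_factorial_smul_tsum_add
    (h : Summable fun n ↦ (‖y‖ + ‖z‖) ^ n / n ! * ‖a n‖) :
    HasSum (fun s ↦ (y ^ s / s ! : 𝕜) • ∑' m, (z ^ m / m ! : 𝕜) • a (s + m))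
      (∑' n, ((y + z) ^ n / n ! : 𝕜) • a n) := by
  have hs := summable_pow_div_factorial_mul_smul_add h
  have hrow : ∀ s, ∑' m, (y ^ s / s ! * (z ^ m / m !) : 𝕜) • a (s + m) =
      (y ^ s / s ! : 𝕜) • ∑' m, (z ^ m / m ! : 𝕜) • a (s + m) := fun s ↦ by
    simp only [mul_smul, tsum_const_smul'']
  have hdiag := hasSum_sum_antidiagonal hs.hasSum
  simp only [sum_antidiagonal_pow_div_factorial_mul_smul] at hdiag
  simpa only [hdiag.tsum_eq, hrow] using
    hs.hasSum.prod_fiberwise fun s ↦ (hs.prod_factor s).hasSum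

end Taylor

lemma besselJJ_add_eq_tsum (s k : ℕ) (x : ℝ) :
    besselJJ (s + k) x =
      ∑' m : ℕ, (-x) ^ m / m ! * (x ^ (s + m + k) / (s + m + k)!) := by
  refine tsum_congr fun m ↦ ?_
  rw [neg_pow, div_mul_div_comm, show m + (s + k) = s + m + k by ring]
  ring

lemma summable_pow_div_factorial_mul_norm_pow_div_factorial (k : ℕ) (r x : ℝ) :
    Summable fun n ↦ r ^ n / n ! * ‖x ^ (n + k) / (n + k)!‖ := by
  refine Summable.of_norm_bounded
    ((Real.summable_pow_div_factorial |r|).mul_right (Real.exp |x|)) fun n ↦ ?_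
  have hx : |x| ^ (n + k) / (n + k)! ≤ Real.exp |x| :=
    Real.pow_div_factorial_le_exp |x| (abs_nonneg x) (n + k)
  simpa using mul_le_mul_of_nonneg_left hx (by positivity : 0 ≤ |r| ^ n / n !)

theorem bessel_summation_classical_general (k : ℕ) (x y : ℝ) :
    HasSum (fun s : ℕ ↦ y ^ s / s ! * besselJJ (s + k) x)
      (∑' n : ℕ, (y - x) ^ n / n ! * (x ^ (n + k) / (n + k)!)) := by
  simpa only [smul_eq_mul, ← besselJJ_add_eq_tsum, ← sub_eq_add_neg] using
    hasSum_pow_div_factorial_smul_tsum_add (y := y) (z := -x)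
      (summable_pow_div_factorial_mul_norm_pow_div_factorial k (‖y‖ + ‖-x‖) x)

/-- `∑_{s=0}^∞ (x^s/s!) 𝒥_{s+k}(x) = x^k/k!`,
with the series converging absolutely. -/
theorem bessel_summation_classical (k : ℕ) (x : ℝ) :
    Summable (fun s : ℕ => x ^ s / s.factorial * besselJJ (s + k) x) ∧
    (∑' s : ℕ, x ^ s / s.factorial * besselJJ (s + k) x) = x ^ k / k.factorial := by
  have h := bessel_summation_classical_general k x x
  rw [tsum_eq_single 0 fun n hn ↦ by simp [hn]] at h
  exact ⟨h.summable, by simpa using h.tsum_eq⟩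
end
end

section
/- Let c ∈ ℝ, d > 0, and x ∈ ℝ. Then Φ^q(q^c, q^d; x) tends to Kummer's confluent hypergeometric function Φ(c,d;x) = ∑_{k=0}^∞ ((c)_k/((d)_k · k!)) x^k as q → 1 from below (q ranging over (0,1)). That is, the function q ↦ ∑_{k=0}^∞ q^{k(k−1)/2} (q^c;q)_k / ((q;q)_k (q^d;q)_k) · ((1−q)x)^k tends to Φ(c,d;x) along the filter of q approaching 1 from the left within (0,1). -/
noncomputable section

/-- The q-Pochhammer symbol `(a;q)_k = ∏_{i=0}^{k-1} (1 - a q^i)`. -/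
def qPoch (a q : ℝ) (k : ℕ) : ℝ := ∏ i ∈ Finset.range k, (1 - a * q ^ i)

/-- The q-Kummer function
`Φ^q(a,b;x) = ∑_{k=0}^∞ q^{k(k-1)/2} (a;q)_k / ((q;q)_k (b;q)_k) ((1-q)x)^k`. -/
def qKummer (q a b x : ℝ) : ℝ :=
  ∑' k : ℕ, q ^ (k * (k - 1) / 2) * qPoch a q k / (qPoch q q k * qPoch b q k) * ((1 - q) * x) ^ k

/-!
Every Pochhammer factor is `1 - q^(a+i) = (1 - q) [a+i]_q`, so the powers of `1 - q` cancel and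
the `k`-th term of `Φ^q(q^c, q^d; x)` is `∏_{i<k} q^i [c+i]_q x / ([i+1]_q [d+i]_q)`. As
`[v]_q → v`, the terms converge to those of `Φ(c, d; x)`, and it remains to dominate them uniformly
for `q` near `1`. The weight `q^i` helps through `(i+1) q^i ≤ [i+1]_q`. If `δ > 0` is a lower bound
for all `|d + i|`, then `[c+i]_q = [d+i]_q + q^(d+i) [c-d]_q` and `q^(d+i) [δ]_q ≤ |[d+i]_q|` bound
`|[c+i]_q / [d+i]_q|` by `1 + |[c-d]_q| / [δ]_q`, which tends to `1 + |c-d| / δ`. Hence the `k`-th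
term is at most `M^k / k!` in absolute value, with `M` independent of `q`.
-/

open Filter Finset Topology

lemma prod_const_div_succ_eq_pow_div_factorial (M : ℝ) (k : ℕ) :
    ∏ i ∈ range k, M / ((i : ℝ) + 1) = M ^ k / k.factorial := by
  rw [prod_div_distrib, prod_const, card_range, ← prod_range_add_one_eq_factorial]
  push_cast
  rfl

lemma exists_pos_le_abs_add_natCast {d : ℝ} (hd : ∀ n : ℕ, d ≠ -n) :
    ∃ δ > 0, ∀ n : ℕ, δ ≤ |d + n| := by
  have hclosed : IsClosed (Set.range ((↑) : ℕ → ℝ)) :=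
    Nat.isClosedEmbedding_coe_real.isClosed_range
  have hmem : -d ∉ Set.range ((↑) : ℕ → ℝ) := by
    rintro ⟨n, hn⟩
    exact hd n (neg_eq_iff_eq_neg.1 hn.symm)
  refine ⟨_, (hclosed.notMem_iff_infDist_pos (Set.range_nonempty _)).1 hmem, fun n => ?_⟩
  calc Metric.infDist (-d) (Set.range ((↑) : ℕ → ℝ)) ≤ dist (-d) n :=
        Metric.infDist_le_dist_of_mem (Set.mem_range_self n)
    _ = |d + n| := by rw [Real.dist_eq, ← abs_neg, neg_sub, sub_neg_eq_add, add_comm]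

lemma nhdsWithin_Ioo_zero_one_le_nhdsNE : 𝓝[Set.Ioo 0 1] (1 : ℝ) ≤ 𝓝[≠] 1 :=
  nhdsWithin_mono 1 fun _ hq => hq.2.ne

/-- The q-number `[v]_q = (1 - q^v) / (1 - q)` of a real number `v`, the q-analogue of `v`. At
`q = 1` it takes the junk value `0`, not `v`. -/
def qNum (q v : ℝ) : ℝ := (1 - q ^ v) / (1 - q)

/-- The ratio of the `(i+1)`-st to the `i`-th term of the series `Φ^q(q^c, q^d; x)`, expressed
through q-numbers so that its limit as `q → 1` can be read off factor by factor. -/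
def qKummerRatio (q c d x : ℝ) (i : ℕ) : ℝ :=
  q ^ i * qNum q (c + i) / (qNum q (i + 1) * qNum q (d + i)) * x

section QNum

variable {q : ℝ}

lemma qNum_add (hq : 0 < q) (v w : ℝ) : qNum q (v + w) = qNum q v + q ^ v * qNum q w := by
  rw [qNum, qNum, qNum, Real.rpow_add hq]
  ring

lemma qNum_neg (hq : 0 < q) (v : ℝ) : qNum q (-v) = -(q ^ (-v) * qNum q v) := by
  have h := qNum_add hq (-v) v
  rw [neg_add_cancel, qNum, Real.rpow_zero, sub_self, zero_div] at h
  linarith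

lemma one_sub_mul_qNum (hq : q ≠ 1) (v : ℝ) : (1 - q) * qNum q v = 1 - q ^ v :=
  mul_div_cancel₀ _ (sub_ne_zero.2 hq.symm)

lemma qNum_natCast (hq : q ≠ 1) (n : ℕ) : qNum q n = ∑ j ∈ range n, q ^ j := by
  rw [qNum, Real.rpow_natCast, div_eq_iff (sub_ne_zero.2 hq.symm), geom_sum_mul_neg]

lemma tendsto_qNum (v : ℝ) : Tendsto (fun q => qNum q v) (𝓝[≠] 1) (𝓝 v) := by
  have hderiv : HasDerivAt (fun q : ℝ => q ^ v) v 1 := by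
    simpa using Real.hasDerivAt_rpow_const (x := 1) (p := v) (Or.inl one_ne_zero)
  refine (hasDerivAt_iff_tendsto_slope.1 hderiv).congr fun q => ?_
  rw [slope_def_field, qNum, Real.one_rpow, ← neg_sub 1 q, ← neg_sub 1 (q ^ v), neg_div_neg_eq]

lemma qNum_pos (hq : q ∈ Set.Ioo (0 : ℝ) 1) {v : ℝ} (hv : 0 < v) : 0 < qNum q v :=
  div_pos (sub_pos.2 (Real.rpow_lt_one hq.1.le hq.2 hv)) (sub_pos.2 hq.2)

lemma monotone_qNum (hq : q ∈ Set.Ioo (0 : ℝ) 1) : Monotone (qNum q) := fun _ _ hvw =>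
  div_le_div_of_nonneg_right
    (sub_le_sub_left (Real.rpow_le_rpow_of_exponent_ge hq.1 hq.2.le hvw) 1) (sub_pos.2 hq.2).le

lemma succ_mul_pow_le_qNum (hq : q ∈ Set.Ioo (0 : ℝ) 1) (n : ℕ) :
    ((n : ℝ) + 1) * q ^ n ≤ qNum q (n + 1) := by
  calc ((n : ℝ) + 1) * q ^ n = ∑ _j ∈ range (n + 1), q ^ n := by simp
    _ ≤ ∑ j ∈ range (n + 1), q ^ j := sum_le_sum fun j hj =>
        pow_le_pow_of_le_one hq.1.le hq.2.le (mem_range_succ_iff.1 hj)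
    _ = qNum q (n + 1) := by rw [← qNum_natCast hq.2.ne, Nat.cast_succ]

lemma rpow_mul_qNum_le_abs_qNum (hq : q ∈ Set.Ioo (0 : ℝ) 1) {δ v : ℝ} (hδ : 0 < δ)
    (hv : δ ≤ |v|) : q ^ v * qNum q δ ≤ |qNum q v| := by
  have hqv : 0 < q ^ v := Real.rpow_pos_of_pos hq.1 v
  rcases le_abs.1 hv with h | h
  · calc q ^ v * qNum q δ ≤ 1 * qNum q δ :=
          mul_le_mul_of_nonneg_right
            (Real.rpow_le_one hq.1.le hq.2.le (hδ.le.trans h)) (qNum_pos hq hδ).le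
      _ ≤ qNum q v := by simpa only [one_mul] using monotone_qNum hq h
      _ ≤ |qNum q v| := le_abs_self _
  · calc q ^ v * qNum q δ ≤ q ^ v * qNum q (-v) :=
          mul_le_mul_of_nonneg_left (monotone_qNum hq h) hqv.le
      _ = -qNum q v := by rw [← neg_neg v, qNum_neg hq.1 (-v), neg_neg, neg_neg]
      _ ≤ |qNum q v| := neg_le_abs _

lemma abs_qNum_le_mul_abs_qNum (hq : q ∈ Set.Ioo (0 : ℝ) 1) {δ v : ℝ} (hδ : 0 < δ)
    (hv : δ ≤ |v|) (w : ℝ) :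
    |qNum q w| ≤ (1 + |qNum q (w - v)| / qNum q δ) * |qNum q v| := by
  have hqv : 0 < q ^ v := Real.rpow_pos_of_pos hq.1 v
  have hqδ := qNum_pos hq hδ
  have hqv_le : q ^ v ≤ |qNum q v| / qNum q δ :=
    (le_div_iff₀ hqδ).2 (rpow_mul_qNum_le_abs_qNum hq hδ hv)
  calc |qNum q w| = |qNum q v + q ^ v * qNum q (w - v)| := by
        rw [← qNum_add hq.1, add_sub_cancel]
    _ ≤ |qNum q v| + q ^ v * |qNum q (w - v)| := by
        simpa only [abs_mul, abs_of_pos hqv] using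
          abs_add_le (qNum q v) (q ^ v * qNum q (w - v))
    _ ≤ |qNum q v| + |qNum q v| / qNum q δ * |qNum q (w - v)| := by gcongr
    _ = (1 + |qNum q (w - v)| / qNum q δ) * |qNum q v| := by ring

end QNum

lemma qPoch_rpow {q : ℝ} (hq₀ : 0 < q) (hq₁ : q ≠ 1) (a : ℝ) (k : ℕ) :
    qPoch (q ^ a) q k = (1 - q) ^ k * ∏ i ∈ range k, qNum q (a + i) := by
  simp only [qPoch, ← Real.rpow_natCast, ← Real.rpow_add hq₀, ← one_sub_mul_qNum hq₁,
    prod_mul_distrib, prod_const, card_range]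

lemma qKummer_term_eq_prod {q : ℝ} (hq₀ : 0 < q) (hq₁ : q ≠ 1) (c d x : ℝ) (k : ℕ) :
    q ^ (k * (k - 1) / 2) * qPoch (q ^ c) q k / (qPoch q q k * qPoch (q ^ d) q k) *
      ((1 - q) * x) ^ k = ∏ i ∈ range k, qKummerRatio q c d x i := by
  have hqq : qPoch q q k = (1 - q) ^ k * ∏ i ∈ range k, qNum q (i + 1) := by
    simpa only [Real.rpow_one, add_comm (1 : ℝ)] using qPoch_rpow hq₀ hq₁ 1 k
  simp only [qKummerRatio, prod_mul_distrib, prod_div_distrib, prod_const, card_range,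
    hqq, qPoch_rpow hq₀ hq₁, mul_pow, ← sum_range_id, ← prod_pow_eq_pow_sum]
  field_simp

lemma kummerPhi_term_eq_prod (c d x : ℝ) (k : ℕ) :
    risingFactorial c k / (risingFactorial d k * k.factorial) * x ^ k =
      ∏ i ∈ range k, (c + i) / ((i + 1) * (d + i)) * x := by
  rw [← prod_range_add_one_eq_factorial, risingFactorial, risingFactorial]
  push_cast
  rw [prod_mul_distrib, prod_div_distrib, prod_mul_distrib, prod_const, card_range,
    mul_comm (∏ i ∈ range k, (d + i))]

lemma tendsto_qKummerRatio (c x : ℝ) {d : ℝ} {i : ℕ} (hd : d + i ≠ 0) :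
    Tendsto (fun q => qKummerRatio q c d x i) (𝓝[≠] 1)
      (𝓝 ((c + i) / ((i + 1) * (d + i)) * x)) := by
  have hpow : Tendsto (fun q : ℝ => q ^ i) (𝓝[≠] 1) (𝓝 1) := by
    simpa only [one_pow] using ((continuous_pow i).tendsto (1 : ℝ)).mono_left nhdsWithin_le_nhds
  have hnum : Tendsto (fun q => q ^ i * qNum q (c + i)) (𝓝[≠] 1) (𝓝 (c + i)) := by
    simpa only [one_mul] using hpow.mul (tendsto_qNum (c + i))
  have hden : Tendsto (fun q => qNum q (i + 1) * qNum q (d + i)) (𝓝[≠] 1)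
      (𝓝 ((i + 1) * (d + i))) := (tendsto_qNum _).mul (tendsto_qNum _)
  exact (hnum.div hden (mul_ne_zero i.cast_add_one_ne_zero hd)).mul_const x

lemma abs_qKummerRatio_le {q δ d : ℝ} {i : ℕ} (hq : q ∈ Set.Ioo (0 : ℝ) 1) (hδ : 0 < δ)
    (hd : δ ≤ |d + i|) (c x : ℝ) :
    |qKummerRatio q c d x i| ≤ (1 + |qNum q (c - d)| / qNum q δ) * |x| / (i + 1) := by
  set C := 1 + |qNum q (c - d)| / qNum q δ
  have hqi : 0 < q ^ i := pow_pos hq.1 i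
  have hsucc : 0 < qNum q (i + 1) := qNum_pos hq i.cast_add_one_pos
  have hdi : 0 < |qNum q (d + i)| :=
    (mul_pos (Real.rpow_pos_of_pos hq.1 _) (qNum_pos hq hδ)).trans_le
      (rpow_mul_qNum_le_abs_qNum hq hδ hd)
  have hweight : q ^ i / qNum q (i + 1) ≤ 1 / (i + 1) := by
    rw [div_le_div_iff₀ hsucc i.cast_add_one_pos, one_mul, mul_comm]
    exact succ_mul_pow_le_qNum hq i
  have hratio : |qNum q (c + i)| / |qNum q (d + i)| ≤ C := by
    rw [div_le_iff₀ hdi]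
    simpa only [add_sub_add_right_eq_sub] using abs_qNum_le_mul_abs_qNum hq hδ hd (c + i)
  calc |qKummerRatio q c d x i|
      = q ^ i / qNum q (i + 1) * (|qNum q (c + i)| / |qNum q (d + i)|) * |x| := by
        rw [qKummerRatio, abs_mul, abs_div, abs_mul, abs_mul, abs_of_pos hqi, abs_of_pos hsucc,
          mul_div_mul_comm]
    _ ≤ 1 / (i + 1) * C * |x| := by gcongr
    _ = C * |x| / (i + 1) := by ring

lemma exists_eventually_abs_qKummerRatio_le (c x : ℝ) {d : ℝ} (hd : ∀ n : ℕ, d ≠ -n) :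
    ∃ M : ℝ, ∀ᶠ q in 𝓝[Set.Ioo 0 1] 1, ∀ i : ℕ, |qKummerRatio q c d x i| ≤ M / (i + 1) := by
  obtain ⟨δ, hδ, hle⟩ := exists_pos_le_abs_add_natCast hd
  have hlim : Tendsto (fun q => (1 + |qNum q (c - d)| / qNum q δ) * |x|) (𝓝[≠] 1)
      (𝓝 ((1 + |c - d| / δ) * |x|)) :=
    (((tendsto_qNum _).abs.div (tendsto_qNum δ) hδ.ne').const_add 1).mul_const _
  refine ⟨(1 + |c - d| / δ) * |x| + 1, ?_⟩
  filter_upwards [self_mem_nhdsWithin,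
    nhdsWithin_Ioo_zero_one_le_nhdsNE (hlim.eventually_le_const (lt_add_one _))] with q hq hM i
  calc |qKummerRatio q c d x i|
      ≤ (1 + |qNum q (c - d)| / qNum q δ) * |x| / (i + 1) := abs_qKummerRatio_le hq hδ (hle i) c x
    _ ≤ _ := by gcongr

theorem qKummer_tendsto_kummer_general (c d : ℝ) (hd : ∀ n : ℕ, d ≠ -n) (x : ℝ) :
    Tendsto (fun q : ℝ => qKummer q (q ^ c) (q ^ d) x)
      (𝓝[Set.Ioo 0 1] 1) (𝓝 (kummerPhi c d x)) := by
  obtain ⟨M, hM⟩ := exists_eventually_abs_qKummerRatio_le c x hd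
  refine tendsto_tsum_of_dominated_convergence (Real.summable_pow_div_factorial M)
    (fun k => ?_) ?_
  · rw [kummerPhi_term_eq_prod]
    have hprod := tendsto_finsetProd (range k) fun i _ =>
      (tendsto_qKummerRatio c x (mt eq_neg_of_add_eq_zero_left (hd i))).mono_left
        nhdsWithin_Ioo_zero_one_le_nhdsNE
    refine hprod.congr' ?_
    filter_upwards [self_mem_nhdsWithin] with q hq
    exact (qKummer_term_eq_prod hq.1 hq.2.ne c d x k).symm
  · filter_upwards [self_mem_nhdsWithin, hM] with q hq hMq k
    rw [qKummer_term_eq_prod hq.1 hq.2.ne, Real.norm_eq_abs, abs_prod,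
      ← prod_const_div_succ_eq_pow_div_factorial]
    exact prod_le_prod (fun i _ => abs_nonneg _) fun i _ => hMq i

/-- `Φ^q(q^c, q^d; x) → Φ(c,d;x)` as `q → 1⁻` within `(0,1)`. -/
theorem qKummer_tendsto_kummer (c d : ℝ) (hd : 0 < d) (x : ℝ) :
    Filter.Tendsto (fun q : ℝ => qKummer q (q ^ c) (q ^ d) x)
      (nhdsWithin 1 (Set.Ioo 0 1)) (nhds (kummerPhi c d x)) := by
  refine qKummer_tendsto_kummer_general c d (fun n => ?_) x
  exact (neg_nonpos.2 n.cast_nonneg |>.trans_lt hd).ne'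
end
end
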